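/- Let X and Y be complex Banach spaces, T a bounded linear operator on X, S a bounded linear operator on Y, and β an ordinal. Then the direct sum operator S ⊕ T on Y × X is g_σ^{β+1}-invertible if and only if both S and T are g_σ^{β+1}-invertible. -/

import Mathlib

open Ordinal Set

/-- The `α`-th Cantor–Bendixson derivative of a set `A ⊆ ℂ`, defined by transfinite
recursion: `cbd A 0 = A`, `cbd A (β+1) = derivedSet (cbd A β)` (the set of accumulation
points of `cbd A β`), and `cbd A α = ⋂_{β < α} cbd A β` for limit ordinals `α`. -/
noncomputable def cbd (A : Set ℂ) (α : Ordinal) : Set ℂ :=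
  Ordinal.limitRecOn α A (fun _ ih => derivedSet ih)
    (fun α _ ih => ⋂ (β : Set.Iio α), ih β.1 β.2)

variable {X : Type*} [NormedAddCommGroup X] [NormedSpace ℂ X] [CompleteSpace X]

/-- The restriction `T_M` of a bounded operator `T` to a `T`-invariant subspace `M`. -/
noncomputable def restr (T : X →L[ℂ] X) (M : Submodule ℂ X)
    (hM : ∀ x ∈ M, T x ∈ M) : M →L[ℂ] M :=
  { toLinearMap := T.toLinearMap.restrict hM
    cont := (T.continuous.comp continuous_subtype_val).subtype_mk _ }


/-- `T` is `g_σ^{β+1}`-invertible: there is `(M, N) ∈ Red T` (a pair of closed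
`T`-invariant subspaces with `X = M ⊕ N`) such that `T_M` is invertible and
`acc^β σ(T_N) ⊆ {0}`. -/
def GInv (β : Ordinal) (T : X →L[ℂ] X) : Prop :=
  ∃ (M N : Submodule ℂ X) (hM : ∀ x ∈ M, T x ∈ M) (hN : ∀ x ∈ N, T x ∈ N),
    IsClosed (M : Set X) ∧ IsClosed (N : Set X) ∧ IsCompl M N ∧
    IsUnit (restr T M hM) ∧ cbd (spectrum ℂ (restr T N hN)) β ⊆ {0}


section CBD

theorem cbd_zero (A : Set ℂ) : cbd A 0 = A := by
  simp [cbd]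

theorem cbd_add_one (A : Set ℂ) (o : Ordinal) : cbd A (o + 1) = derivedSet (cbd A o) := by
  simp [cbd]

theorem cbd_limit (A : Set ℂ) (o : Ordinal) (h : Order.IsSuccLimit o) :
    cbd A o = ⋂ (b : Set.Iio o), cbd A b.1 := by
  unfold cbd
  rw [Ordinal.limitRecOn_limit _ _ _ _ h]

theorem isClosed_cbd {A : Set ℂ} (hA : IsClosed A) (o : Ordinal) : IsClosed (cbd A o) := by
  induction o using Ordinal.limitRecOn with
  | zero => rwa [cbd_zero]
  | add_one o ih => rw [cbd_add_one]; exact isClosed_derivedSet _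
  | limit o h ih =>
    rw [cbd_limit A o h]
    exact isClosed_iInter fun b => ih b.1 b.2

theorem cbd_anti {A : Set ℂ} (hA : IsClosed A) (o : Ordinal) :
    ∀ b ≤ o, cbd A o ⊆ cbd A b := by
  induction o using Ordinal.limitRecOn with
  | zero => intro b hb; rw [nonpos_iff_eq_zero.1 hb]
  | add_one o ih =>
    intro b hb
    rcases hb.eq_or_lt with rfl | hb
    · exact subset_rfl
    · rw [cbd_add_one]
      exact ((isClosed_iff_derivedSet_subset _).1 (isClosed_cbd hA o)).trans
        (ih b (Order.lt_add_one_iff.1 hb))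
  | limit o h ih =>
    intro b hb
    rcases hb.eq_or_lt with rfl | hb
    · exact subset_rfl
    · rw [cbd_limit A o h]
      exact iInter_subset (fun b : Set.Iio o => cbd A b.1) ⟨b, hb⟩

theorem cbd_mono {A B : Set ℂ} (h : A ⊆ B) (o : Ordinal) : cbd A o ⊆ cbd B o := by
  induction o using Ordinal.limitRecOn with
  | zero => rwa [cbd_zero, cbd_zero]
  | add_one o ih => rw [cbd_add_one, cbd_add_one]; exact derivedSet_mono _ _ ih
  | limit o h ih =>
    rw [cbd_limit A o h, cbd_limit B o h]
    exact iInter_mono fun b => ih b.1 b.2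

theorem cbd_subset {A : Set ℂ} (hA : IsClosed A) (o : Ordinal) : cbd A o ⊆ A := by
  simpa [cbd_zero] using cbd_anti hA o 0 zero_le

theorem cbd_union {A B : Set ℂ} (hA : IsClosed A) (hB : IsClosed B) (o : Ordinal) :
    cbd (A ∪ B) o = cbd A o ∪ cbd B o := by
  induction o using Ordinal.limitRecOn with
  | zero => simp only [cbd_zero]
  | add_one o ih => simp only [cbd_add_one, ih, derivedSet_union]
  | limit o h ih =>
    apply Subset.antisymm _
      (union_subset (cbd_mono subset_union_left _) (cbd_mono subset_union_right _))
    rw [cbd_limit _ o h, cbd_limit A o h, cbd_limit B o h]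
    intro x hx
    by_contra hcon
    simp only [mem_union, mem_iInter, not_or, not_forall] at hcon hx
    obtain ⟨⟨b, hb⟩, ⟨c, hc⟩⟩ := hcon
    have hm := hx ⟨max b.1 c.1, mem_Iio.2 (max_lt b.2 c.2)⟩
    rw [ih _ (max_lt (mem_Iio.1 b.2) (mem_Iio.1 c.2))] at hm
    rcases hm with hm | hm
    · exact hb (cbd_anti hA _ _ (le_max_left _ _) hm)
    · exact hc (cbd_anti hB _ _ (le_max_right _ _) hm)

theorem perfect_subset_cbd {A D : Set ℂ} (hD : Preperfect D) (h : D ⊆ A) (o : Ordinal) :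
    D ⊆ cbd A o := by
  induction o using Ordinal.limitRecOn with
  | zero => rwa [cbd_zero]
  | add_one o ih =>
    rw [cbd_add_one]
    exact (preperfect_iff_subset_derivedSet.1 hD).trans (derivedSet_mono _ _ ih)
  | limit o h ih =>
    rw [cbd_limit A o h]
    exact subset_iInter fun b => ih b.1 b.2

/-- If the derivative of order `o` of a compact set omits a punctured disc, then there are
arbitrarily small closed annuli missing the set. -/
theorem exists_annulus {A : Set ℂ} (hA : IsCompact A) (o : Ordinal) {ε : ℝ} (hε : 0 < ε)
    (h : ∀ z ∈ cbd A o, ‖z‖ < ε → z = 0) :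
    ∃ s t : ℝ, 0 < s ∧ s < t ∧ t < ε ∧ ∀ z, s ≤ ‖z‖ → ‖z‖ ≤ t → z ∉ A := by
  obtain ⟨V, D, hV, hD, hVD⟩ := exists_countable_union_perfect_of_isClosed hA.isClosed
  have hDs : D ⊆ cbd A o := perfect_subset_cbd hD.acc (hVD ▸ subset_union_right) o
  have hc : ((fun z : ℂ => ‖z‖) '' V).Countable := hV.image _
  obtain ⟨r, hr, hrV⟩ : ∃ r ∈ Ioo 0 ε, r ∉ (fun z : ℂ => ‖z‖) '' V := by
    by_contra! hcon
    have : (Ioo (0 : ℝ) ε).Countable := hc.mono hcon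
    exact (Cardinal.Real.Ioo_countable_iff.1 this).not_gt hε
  have hcl : IsClosed ((fun z : ℂ => ‖z‖) '' A) := (hA.image continuous_norm).isClosed
  have hrA : r ∉ (fun z : ℂ => ‖z‖) '' A := by
    rintro ⟨z, hz, rfl⟩
    rw [hVD] at hz
    rcases hz with hz | hz
    · exact hrV ⟨z, hz, rfl⟩
    · have := h z (hDs hz) hr.2
      simp [this] at hr
  obtain ⟨δ, hδ, hb⟩ := Metric.isOpen_iff.1 (hcl.isOpen_compl.inter isOpen_Ioo) r ⟨hrA, hr⟩
  have h1 : r + δ / 2 ∈ Metric.ball r δ := by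
    rw [Real.ball_eq_Ioo]; constructor <;> linarith
  have h2 := (hb h1).2
  refine ⟨r, r + δ / 2, hr.1, by linarith, h2.2, fun z hz1 hz2 hz => ?_⟩
  have h3 : ‖z‖ ∈ Metric.ball r δ := by
    rw [Real.ball_eq_Ioo]; constructor <;> linarith
  exact (hb h3).1 ⟨z, hz, rfl⟩

end CBD

section Riesz

open Complex Metric

variable {A : Type*} [NormedRing A] [NormedAlgebra ℂ A] [CompleteSpace A]

theorem clm_circleIntegral (L : A →L[ℂ] A) {f : ℂ → A} {c : ℂ} {r : ℝ}
    (hf : CircleIntegrable f c r) :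
    L (∮ w in C(c, r), f w) = ∮ w in C(c, r), L (f w) := by
  unfold circleIntegral
  rw [← ContinuousLinearMap.intervalIntegral_comp_comm L hf.out]
  simp

theorem mul_circleIntegral (b : A) {f : ℂ → A} {c : ℂ} {r : ℝ}
    (hf : CircleIntegrable f c r) :
    b * (∮ w in C(c, r), f w) = ∮ w in C(c, r), b * f w :=
  clm_circleIntegral (ContinuousLinearMap.mul ℂ A b) hf

theorem circleIntegral_mul (b : A) {f : ℂ → A} {c : ℂ} {r : ℝ}
    (hf : CircleIntegrable f c r) :
    (∮ w in C(c, r), f w) * b = ∮ w in C(c, r), f w * b :=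
  clm_circleIntegral ((ContinuousLinearMap.mul ℂ A).flip b) hf

theorem commute_circleIntegral (b : A) {f : ℂ → A} {c : ℂ} {r : ℝ} (hr : 0 ≤ r)
    (hf : CircleIntegrable f c r) (h : ∀ w ∈ sphere c r, Commute b (f w)) :
    Commute b (∮ w in C(c, r), f w) := by
  unfold Commute SemiconjBy
  rw [mul_circleIntegral b hf, circleIntegral_mul b hf]
  exact circleIntegral.integral_congr hr fun w hw => h w hw

theorem mul_resolvent {a : A} {z : ℂ} (hz : z ∈ resolventSet ℂ a) :
    (algebraMap ℂ A z - a) * resolvent a z = 1 :=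
  Ring.mul_inverse_cancel _ hz

theorem resolvent_mul {a : A} {z : ℂ} (hz : z ∈ resolventSet ℂ a) :
    resolvent a z * (algebraMap ℂ A z - a) = 1 :=
  Ring.inverse_mul_cancel _ hz

theorem commute_resolvent {a b : A} {z : ℂ} (hz : z ∈ resolventSet ℂ a) (h : Commute b a) :
    Commute b (resolvent a z) := by
  have h1 : Commute b (algebraMap ℂ A z - a) :=
    Commute.sub_right (Algebra.commutes z b).symm h
  have e1 := mul_resolvent hz
  have e2 := resolvent_mul hz
  show b * _ = _ * b
  calc b * resolvent a z
      = resolvent a z * (algebraMap ℂ A z - a) * b * resolvent a z := by rw [e2, one_mul]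
    _ = resolvent a z * (b * (algebraMap ℂ A z - a)) * resolvent a z := by
        rw [h1.eq]; simp only [mul_assoc]
    _ = resolvent a z * b * ((algebraMap ℂ A z - a) * resolvent a z) := by
        simp only [mul_assoc]
    _ = _ := by rw [e1, mul_one]

theorem continuousOn_resolvent {a : A} {K : Set ℂ} (hK : K ⊆ resolventSet ℂ a) :
    ContinuousOn (resolvent a) K := fun z hz =>
  (spectrum.hasDerivAt_resolvent_const_left (hK hz)).continuousAt.continuousWithinAt

theorem continuousOn_kernel {r : ℝ} {z : ℂ} (hz : z ∉ sphere (0 : ℂ) r) :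
    ContinuousOn (fun w : ℂ => (w - z)⁻¹) (sphere 0 r) :=
  ContinuousOn.inv₀ (by fun_prop) fun w hw h => hz (by
    rw [← sub_eq_zero.1 h]; exact hw)

theorem cauchy_key {a : A} {r : ℝ} (hr : 0 ≤ r) (hK : sphere 0 r ⊆ resolventSet ℂ a)
    {z k : ℂ} (hz : z ∉ sphere (0 : ℂ) r) (hk : (∮ w in C(0, r), (w - z)⁻¹) = k) :
    (algebraMap ℂ A z - a) * (∮ w in C(0, r), (w - z)⁻¹ • resolvent a w)
      = k • (1 : A) - ∮ w in C(0, r), resolvent a w := by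
  have hc := continuousOn_resolvent hK
  have hc' := continuousOn_kernel hz
  have i1 : CircleIntegrable (fun w => (w - z)⁻¹ • resolvent a w) 0 r :=
    (hc'.smul hc).circleIntegrable hr
  have i2 : CircleIntegrable (fun w => (w - z)⁻¹ • (1 : A)) 0 r :=
    (hc'.smul continuousOn_const).circleIntegrable hr
  rw [mul_circleIntegral _ i1, ← hk,
    ← circleIntegral.integral_smul_const, ← circleIntegral.integral_sub
    i2 (hc.circleIntegrable hr)]
  refine circleIntegral.integral_congr hr fun w hw => ?_
  have hne : w - z ≠ 0 := fun h => hz (by rw [← sub_eq_zero.1 h]; exact hw)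
  have e : algebraMap ℂ A z - a = (algebraMap ℂ A w - a) - algebraMap ℂ A (w - z) := by
    rw [map_sub]; abel
  rw [e, sub_mul, mul_smul_comm, mul_resolvent (hK hw), ← Algebra.smul_def, smul_smul,
    mul_inv_cancel₀ hne, one_smul]

theorem riesz_projection (a : A) {s t : ℝ} (hs : 0 < s) (hst : s < t)
    (h : ∀ z, s ≤ ‖z‖ → ‖z‖ ≤ t → z ∈ resolventSet ℂ a) :
    ∃ p : A, p * p = p ∧ Commute a p ∧
      (∃ q, Commute q p ∧ a * q = 1 - p ∧ q * a = 1 - p) ∧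
      ∀ z : ℂ, s < ‖z‖ → ∃ q, Commute q p ∧ (algebraMap ℂ A z - a) * q = p ∧
        q * (algebraMap ℂ A z - a) = p := by
  have ht : 0 < t := hs.trans hst
  have hKs : sphere 0 s ⊆ resolventSet ℂ a := fun z hz => by
    rw [mem_sphere_zero_iff_norm] at hz; exact h z hz.ge (hz.trans_le hst.le)
  have hKt : sphere 0 t ⊆ resolventSet ℂ a := fun z hz => by
    rw [mem_sphere_zero_iff_norm] at hz; exact h z (hz ▸ hst.le) hz.le
  have hcs := continuousOn_resolvent hKs
  have hct := continuousOn_resolvent hKt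
  set c : ℂ := (2 * Real.pi * I : ℂ)⁻¹ with hcdef
  have hc0 : (2 * Real.pi * I : ℂ) ≠ 0 := Complex.two_pi_I_ne_zero
  have hPst : (∮ w in C(0, t), resolvent a w) = ∮ w in C(0, s), resolvent a w := by
    refine Complex.circleIntegral_eq_of_differentiable_on_annulus_off_countable hs hst.le
      countable_empty (continuousOn_resolvent fun z hz => ?_) fun z hz => ?_
    · have h1 := hz.1
      have h2 := hz.2
      simp only [mem_closedBall, mem_ball, dist_zero_right, not_lt] at h1 h2
      exact h z h2 h1
    · have h1 := hz.1.1
      have h2 := hz.1.2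
      simp only [mem_closedBall, mem_ball, dist_zero_right, not_le] at h1 h2
      exact (spectrum.hasDerivAt_resolvent_const_left (h z h2.le h1.le)).differentiableAt
  set p : A := c • ∮ w in C(0, t), resolvent a w with hp
  have hps : p = c • ∮ w in C(0, s), resolvent a w := by rw [hp, hPst]
  -- anything commuting with `a` commutes with `p`
  have hcomm : ∀ b : A, Commute b a → Commute b p := fun b hb =>
    (commute_circleIntegral b ht.le (hct.circleIntegrable ht.le)
      fun w hw => commute_resolvent (hKt hw) hb).smul_right c
  have hQcomm : ∀ r : ℝ, 0 ≤ r → sphere 0 r ⊆ resolventSet ℂ a → ∀ z ∉ sphere (0 : ℂ) r,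
      ∀ b : A, Commute b a → Commute b (∮ w in C(0, r), (w - z)⁻¹ • resolvent a w) :=
    fun r hr hK z hz b hb => commute_circleIntegral b hr
      (((continuousOn_kernel hz).smul (continuousOn_resolvent hK)).circleIntegrable hr)
      fun w hw => (commute_resolvent (hK hw) hb).smul_right _
  -- the inner Cauchy transform
  let Q : ℂ → A := fun z => c • ∮ w in C(0, t), (w - z)⁻¹ • resolvent a w
  have hQ : ∀ z, ‖z‖ < t → (algebraMap ℂ A z - a) * Q z = 1 - p := by
    intro z hz
    have hz' : z ∉ sphere (0 : ℂ) t := by rw [mem_sphere_zero_iff_norm]; exact hz.ne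
    have hk := circleIntegral.integral_sub_inv_of_mem_ball (c := 0) (w := z) (R := t)
      (by rwa [mem_ball_zero_iff])
    show _ * (c • _) = _
    rw [mul_smul_comm, cauchy_key ht.le hKt hz' hk, smul_sub, smul_smul, hcdef,
      inv_mul_cancel₀ hc0, one_smul]
  have hQd : ∀ z ∈ ball (0 : ℂ) t, DifferentiableAt ℂ Q z := by
    lift t to NNReal using ht.le
    have := hasFPowerSeriesOn_cauchy_integral (f := resolvent a) (c := 0) (R := t)
      (hct.circleIntegrable ht.le) (by exact_mod_cast ht)
    intro z hz
    refine (this.analyticAt_of_mem ?_).differentiableAt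
    rw [Metric.eball_coe]
    exact hz
  have hidem : p * p = p := by
    have h0 : (∮ z in C(0, s), Q z) = 0 :=
      Complex.circleIntegral_eq_zero_of_differentiable_on_off_countable hs.le countable_empty
        (fun z hz => (hQd z (closedBall_subset_ball hst hz)).continuousAt.continuousWithinAt)
        fun z hz => hQd z (ball_subset_ball hst.le hz.1)
    have h1 : (∮ z in C(0, s), Q z) = ∮ z in C(0, s), resolvent a z * (1 - p) := by
      refine circleIntegral.integral_congr hs.le fun z hz => ?_
      have hz' : ‖z‖ < t := by rw [mem_sphere_zero_iff_norm.1 hz]; exact hst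
      rw [← hQ z hz', ← mul_assoc, resolvent_mul (hKs hz), one_mul]
    rw [h0, ← circleIntegral_mul _ (hcs.circleIntegrable hs.le)] at h1
    have h2 : p * (1 - p) = 0 := by
      nth_rewrite 1 [hps]
      rw [smul_mul_assoc, ← h1, smul_zero]
    rw [_root_.mul_sub, mul_one, sub_eq_zero] at h2
    exact h2.symm
  refine ⟨p, hidem, hcomm a (Commute.refl a), ?_, ?_⟩
  · have hz' : (0 : ℂ) ∉ sphere (0 : ℂ) t := by
      rw [mem_sphere_zero_iff_norm, norm_zero]; exact ht.ne
    have hca : Commute a (Q 0) := (hQcomm t ht.le hKt 0 hz' a (Commute.refl a)).smul_right c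
    have e := hQ 0 (by simpa using ht)
    rw [map_zero, _root_.zero_sub, neg_mul] at e
    refine ⟨- Q 0, hcomm _ hca.symm.neg_left, by rw [mul_neg, e], ?_⟩
    rw [neg_mul, ← hca.eq, e]
  · intro z hz
    have hz' : z ∉ sphere (0 : ℂ) s := by rw [mem_sphere_zero_iff_norm]; exact hz.ne'
    have hk : (∮ w in C(0, s), (w - z)⁻¹) = 0 := by
      have hd : ∀ w ∈ closedBall (0 : ℂ) s, DifferentiableAt ℂ (fun w : ℂ => (w - z)⁻¹) w := by
        intro w hw
        refine (differentiableAt_id.sub_const z).inv fun h0 => ?_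
        have : w = z := sub_eq_zero.1 h0
        rw [this, mem_closedBall_zero_iff] at hw
        linarith
      exact Complex.circleIntegral_eq_zero_of_differentiable_on_off_countable hs.le
        countable_empty (fun w hw => (hd w hw).continuousAt.continuousWithinAt)
        fun w hw => hd w (ball_subset_closedBall hw.1)
    have e := cauchy_key hs.le hKs hz' hk
    rw [zero_smul, _root_.zero_sub] at e
    have hca : Commute a (∮ w in C(0, s), (w - z)⁻¹ • resolvent a w) :=
      hQcomm s hs.le hKs z hz' a (Commute.refl a)
    set q : A := -(c • ∮ w in C(0, s), (w - z)⁻¹ • resolvent a w) with hq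
    have hqa : Commute a q := (hca.smul_right c).neg_right
    have e1 : (algebraMap ℂ A z - a) * q = p := by
      rw [hq, mul_neg, mul_smul_comm, e, smul_neg, neg_neg, hps]
    refine ⟨q, hcomm _ hqa.symm, e1, ?_⟩
    have : Commute (algebraMap ℂ A z - a) q := Commute.sub_left (Algebra.commutes z q) hqa
    rw [← this.eq, e1]

end Riesz

section Operators

theorem notMem_spectrum_iff {E : Type*} [NormedAddCommGroup E] [NormedSpace ℂ E]
    [CompleteSpace E] (T : E →L[ℂ] E) (z : ℂ) :
    z ∉ spectrum ℂ T ↔ Function.Bijective (fun x => z • x - T x) := by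
  rw [spectrum.notMem_iff, ContinuousLinearMap.isUnit_iff_bijective]
  rfl

theorem isClosed_spectrum_op {E : Type*} [NormedAddCommGroup E] [NormedSpace ℂ E]
    [CompleteSpace E] (T : E →L[ℂ] E) : IsClosed (spectrum ℂ T) :=
  spectrum.isClosed T

theorem bijective_restr_iff (T : X →L[ℂ] X) (M : Submodule ℂ X)
    (hM : ∀ x ∈ M, T x ∈ M) (z : ℂ) :
    Function.Bijective (fun x : M => z • x - restr T M hM x) ↔
      (∀ x ∈ M, z • x - T x = 0 → x = 0) ∧ ∀ y ∈ M, ∃ x ∈ M, z • x - T x = y := by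
  have hcoe : ∀ x : M, ((z • x - restr T M hM x : M) : X) = z • (x : X) - T x := fun x => rfl
  constructor
  · rintro ⟨hi, hs⟩
    refine ⟨fun x hx h => ?_, fun y hy => ?_⟩
    · have : (⟨x, hx⟩ : M) = 0 := hi (by
        apply Subtype.ext
        simp only [hcoe, h]
        simp)
      simpa using congrArg Subtype.val this
    · obtain ⟨x, hx⟩ := hs ⟨y, hy⟩
      exact ⟨x, x.2, by rw [← hcoe]; exact congrArg Subtype.val hx⟩
  · rintro ⟨hi, hs⟩
    refine ⟨fun x y h => ?_, fun y => ?_⟩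
    · have h' := congrArg Subtype.val h
      simp only [hcoe] at h'
      apply Subtype.ext
      rw [← sub_eq_zero]
      refine hi _ (M.sub_mem x.2 y.2) ?_
      rw [map_sub, smul_sub, sub_sub_sub_comm, h', _root_.sub_self]
    · obtain ⟨x, hx, h⟩ := hs y y.2
      exact ⟨⟨x, hx⟩, Subtype.ext (by rw [hcoe]; exact h)⟩

theorem notMem_spectrum_restr_iff (T : X →L[ℂ] X) (M : Submodule ℂ X)
    (hM : ∀ x ∈ M, T x ∈ M) (hc : IsClosed (M : Set X)) (z : ℂ) :
    z ∉ spectrum ℂ (restr T M hM) ↔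
      (∀ x ∈ M, z • x - T x = 0 → x = 0) ∧ ∀ y ∈ M, ∃ x ∈ M, z • x - T x = y := by
  have : CompleteSpace M := hc.completeSpace_coe
  rw [notMem_spectrum_iff, bijective_restr_iff]

theorem spectrum_subset_union (T : X →L[ℂ] X) (M N : Submodule ℂ X)
    (hM : ∀ x ∈ M, T x ∈ M) (hN : ∀ x ∈ N, T x ∈ N) (hMc : IsClosed (M : Set X))
    (hNc : IsClosed (N : Set X)) (hMN : IsCompl M N) :
    spectrum ℂ T ⊆ spectrum ℂ (restr T M hM) ∪ spectrum ℂ (restr T N hN) := by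
  intro z hz
  by_contra hcon
  rw [mem_union, not_or, notMem_spectrum_restr_iff T M hM hMc,
    notMem_spectrum_restr_iff T N hN hNc] at hcon
  obtain ⟨⟨h1, h2⟩, h3, h4⟩ := hcon
  refine (notMem_spectrum_iff T z).2 ?_ hz
  have hdec : ∀ x, ∃ m ∈ M, ∃ n ∈ N, m + n = x := fun x =>
    Submodule.mem_sup.1 (hMN.sup_eq_top ▸ Submodule.mem_top)
  have key : ∀ x, z • x - T x = 0 → x = 0 := by
    intro x hx
    obtain ⟨m, hm, n, hn, rfl⟩ := hdec x
    have e : z • m - T m = -(z • n - T n) := by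
      rw [← sub_eq_zero, ← hx, map_add, smul_add]; abel
    have hmM : z • m - T m ∈ M := M.sub_mem (M.smul_mem z hm) (hM m hm)
    have hmN : z • m - T m ∈ N := by
      rw [e]; exact N.neg_mem (N.sub_mem (N.smul_mem z hn) (hN n hn))
    have h0 := Submodule.disjoint_def.1 hMN.disjoint _ hmM hmN
    have h0' : z • n - T n = 0 := by rw [h0] at e; exact neg_eq_zero.1 e.symm
    rw [h1 m hm h0, h3 n hn h0', add_zero]
  refine ⟨fun x y h => ?_, fun y => ?_⟩
  · rw [← sub_eq_zero]
    apply key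
    simp only at h
    rw [map_sub, smul_sub, sub_sub_sub_comm, h, _root_.sub_self]
  · obtain ⟨m, hm, n, hn, rfl⟩ := hdec y
    obtain ⟨m', -, rfl⟩ := h2 m hm
    obtain ⟨n', -, rfl⟩ := h4 n hn
    refine ⟨m' + n', ?_⟩
    simp only [map_add, smul_add]
    abel

theorem spectrum_restr_subset (T : X →L[ℂ] X) (M N : Submodule ℂ X)
    (hM : ∀ x ∈ M, T x ∈ M) (hN : ∀ x ∈ N, T x ∈ N)
    (hNc : IsClosed (N : Set X)) (hMN : IsCompl M N) :
    spectrum ℂ (restr T N hN) ⊆ spectrum ℂ T := by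
  intro z hz
  by_contra hcon
  rw [notMem_spectrum_iff] at hcon
  obtain ⟨hi, hs⟩ := hcon
  have hi' : ∀ x, z • x - T x = 0 → x = 0 := fun x hx => hi (by simpa using hx)
  refine (notMem_spectrum_restr_iff T N hN hNc z).2 ⟨fun x _ => hi' x, fun y hy => ?_⟩ hz
  obtain ⟨x, hx⟩ := hs y
  simp only at hx
  obtain ⟨m, hm, n, hn, rfl⟩ := Submodule.mem_sup.1
    (hMN.sup_eq_top ▸ Submodule.mem_top : x ∈ M ⊔ N)
  have e : z • m - T m = y - (z • n - T n) := by
    rw [← hx, map_add, smul_add]; abel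
  have hmM : z • m - T m ∈ M := M.sub_mem (M.smul_mem z hm) (hM m hm)
  have hmN : z • m - T m ∈ N := by
    rw [e]; exact N.sub_mem hy (N.sub_mem (N.smul_mem z hn) (hN n hn))
  have h0 := hi' m (Submodule.disjoint_def.1 hMN.disjoint _ hmM hmN)
  exact ⟨n, hn, by rw [← hx, h0, zero_add]⟩

theorem spectrum_prodMap {Y : Type*} [NormedAddCommGroup Y] [NormedSpace ℂ Y]
    [CompleteSpace Y] (S : Y →L[ℂ] Y) (T : X →L[ℂ] X) :
    spectrum ℂ (S.prodMap T) = spectrum ℂ S ∪ spectrum ℂ T := by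
  ext z
  rw [← not_iff_not, mem_union, not_or, notMem_spectrum_iff, notMem_spectrum_iff,
    notMem_spectrum_iff, ← Prod.map_bijective]
  rfl

theorem gInv_iff (β : Ordinal) (T : X →L[ℂ] X) :
    GInv β T ↔ ∃ ε > 0, ∀ z ∈ cbd (spectrum ℂ T) β, ‖z‖ < ε → z = 0 := by
  constructor
  · rintro ⟨M, N, hM, hN, hMc, hNc, hMN, hu, hacc⟩
    have : CompleteSpace M := hMc.completeSpace_coe
    have : CompleteSpace N := hNc.completeSpace_coe
    have hcM : IsClosed (spectrum ℂ (restr T M hM)) := isClosed_spectrum_op _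
    have hcN : IsClosed (spectrum ℂ (restr T N hN)) := isClosed_spectrum_op _
    have h0 : (0 : ℂ) ∉ spectrum ℂ (restr T M hM) := by
      rw [spectrum.zero_notMem_iff]; exact hu
    obtain ⟨ε, hε, hb⟩ := Metric.isOpen_iff.1 hcM.isOpen_compl 0 h0
    refine ⟨ε, hε, fun z hz hzε => ?_⟩
    have h1 := cbd_mono (spectrum_subset_union T M N hM hN hMc hNc hMN) β hz
    rw [cbd_union hcM hcN] at h1
    rcases h1 with h1 | h1
    · exact absurd (cbd_subset hcM β h1) (hb (by simpa using hzε))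
    · exact hacc h1
  · rintro ⟨ε, hε, h⟩
    obtain ⟨s, t, hs, hst, htε, hann⟩ := exists_annulus (spectrum.isCompact T) β hε h
    obtain ⟨p, hpp, hap, ⟨q, hqp, haq, hqa⟩, hout⟩ := riesz_projection T hs hst
      (fun z h1 h2 => by
        have := hann z h1 h2
        rwa [spectrum, mem_compl_iff, not_not] at this)
    have hpp' : ∀ x, p (p x) = p x := fun x => DFunLike.congr_fun hpp x
    have hap' : ∀ x, T (p x) = p (T x) := fun x => DFunLike.congr_fun hap.eq x
    have hqp' : ∀ x, q (p x) = p (q x) := fun x => DFunLike.congr_fun hqp.eq x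
    have haq' : ∀ x, T (q x) = x - p x := fun x => DFunLike.congr_fun haq x
    have hqa' : ∀ x, q (T x) = x - p x := fun x => DFunLike.congr_fun hqa x
    let M : Submodule ℂ X := LinearMap.ker p.toLinearMap
    let N : Submodule ℂ X := LinearMap.ker (1 - p : X →L[ℂ] X).toLinearMap
    have memM : ∀ x, x ∈ M ↔ p x = 0 := fun x => LinearMap.mem_ker
    have memN : ∀ x, x ∈ N ↔ p x = x := fun x => by
      show (1 - p : X →L[ℂ] X) x = 0 ↔ _
      rw [ContinuousLinearMap.sub_apply, sub_eq_zero]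
      exact eq_comm
    have hMc : IsClosed (M : Set X) := p.isClosed_ker
    have hNc : IsClosed (N : Set X) := (1 - p : X →L[ℂ] X).isClosed_ker
    have hM : ∀ x ∈ M, T x ∈ M := fun x hx => by
      rw [memM] at *; rw [← hap', hx, map_zero]
    have hN : ∀ x ∈ N, T x ∈ N := fun x hx => by
      rw [memN] at *; rw [← hap', hx]
    have hMN : IsCompl M N := by
      constructor
      · rw [Submodule.disjoint_def]
        intro x h1 h2
        rw [memM] at h1
        rw [memN] at h2
        rw [← h2, h1]
      · rw [codisjoint_iff, eq_top_iff]
        intro x _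
        refine Submodule.mem_sup.2 ⟨x - p x, ?_, p x, ?_, sub_add_cancel _ _⟩
        · rw [memM, map_sub, hpp', _root_.sub_self]
        · rw [memN, hpp']
    have hu : IsUnit (restr T M hM) := by
      rw [← spectrum.zero_notMem_iff ℂ, notMem_spectrum_restr_iff T M hM hMc]
      refine ⟨fun x hx hx0 => ?_, fun y hy => ?_⟩
      · rw [memM] at hx
        have hTx : T x = 0 := by simpa using hx0
        have := hqa' x
        rw [hTx, map_zero, hx, _root_.sub_zero] at this
        exact this.symm
      · rw [memM] at hy
        refine ⟨-q y, ?_, ?_⟩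
        · rw [memM, map_neg, ← hqp', hy, map_zero, neg_zero]
        · rw [map_neg, haq', hy]; simp
    refine ⟨M, N, hM, hN, hMc, hNc, hMN, hu, fun z hz => ?_⟩
    have hsub := spectrum_restr_subset T M N hM hN hNc hMN
    have : CompleteSpace N := hNc.completeSpace_coe
    have hzN : z ∈ spectrum ℂ (restr T N hN) := cbd_subset (isClosed_spectrum_op _) β hz
    refine h z (cbd_mono hsub β hz) ?_
    by_contra hlt
    obtain ⟨g, hgp, hg1, hg2⟩ := hout z (by linarith)
    have hgp' : ∀ x, g (p x) = p (g x) := fun x => DFunLike.congr_fun hgp.eq x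
    have hg1' : ∀ x, z • g x - T (g x) = p x := fun x => DFunLike.congr_fun hg1 x
    have hg2' : ∀ x, g (z • x - T x) = p x := fun x => DFunLike.congr_fun hg2 x
    refine (notMem_spectrum_restr_iff T N hN hNc z).2 ⟨fun x hx hx0 => ?_, fun y hy => ?_⟩ hzN
    · rw [memN] at hx
      rw [← hx, ← hg2', hx0, map_zero]
    · rw [memN] at hy
      refine ⟨g y, ?_, ?_⟩
      · rw [memN, ← hgp', hy]
      · rw [hg1', hy]

end Operators

/-- The direct sum `S ⊕ T` is `g_σ^{β+1}`-invertible iff both `S` and `T` are. -/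
theorem gInv_prodMap_iff {Y : Type*} [NormedAddCommGroup Y] [NormedSpace ℂ Y]
    [CompleteSpace Y] (T : X →L[ℂ] X) (S : Y →L[ℂ] Y) (β : Ordinal) :
    GInv β (S.prodMap T) ↔ GInv β S ∧ GInv β T := by
  rw [gInv_iff, gInv_iff, gInv_iff, spectrum_prodMap,
    cbd_union (spectrum.isClosed S) (spectrum.isClosed T)]
  constructor
  · rintro ⟨ε, hε, h⟩
    exact ⟨⟨ε, hε, fun z hz => h z (Or.inl hz)⟩, ⟨ε, hε, fun z hz => h z (Or.inr hz)⟩⟩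
  · rintro ⟨⟨ε, hε, h⟩, ⟨δ, hδ, h'⟩⟩
    refine ⟨min ε δ, lt_min hε hδ, fun z hz hlt => ?_⟩
    rcases hz with hz | hz
    · exact h z hz (hlt.trans_le (min_le_left _ _))
    · exact h' z hz (hlt.trans_le (min_le_right _ _))
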